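/- Let w(y) = (1 + √(1−y))^(−1/2), y(x) = 8x(2x+1)/(4x+1)², v(x) = x(2x+1)(4x+1), and define the moment generating function A(x, z) = w(y(x)·e^z)/w(y(x)) for x > 0 and real z with y(x)·e^z < 1. Then A satisfies the partial differential equation v(x)·∂A/∂x − ∂A/∂z + x·A = 0 at every such (x, z), and A(x, 0) = 1. -/

import Mathlib

open Real

noncomputable def w (y : ℝ) : ℝ := (1 + Real.sqrt (1 - y)) ^ (-(1 / 2 : ℝ))

noncomputable def yFun (x : ℝ) : ℝ := 8 * x * (2 * x + 1) / (4 * x + 1) ^ 2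

noncomputable def v (x : ℝ) : ℝ := x * (2 * x + 1) * (4 * x + 1)

noncomputable def A (x z : ℝ) : ℝ := w (yFun x * Real.exp z) / w (yFun x)

theorem w_hasDeriv (y : ℝ) (hy : y < 1) :
    HasDerivAt w (w y / (4 * √(1 - y) * (1 + √(1 - y)))) y := by
  have hs : 0 < √(1 - y) := Real.sqrt_pos.mpr (by linarith)
  have h1 : HasDerivAt (fun y : ℝ => 1 + √(1 - y)) (-1 / (2 * √(1 - y))) y :=
    (((hasDerivAt_id y).const_sub 1).sqrt (by simp only [id]; linarith)).const_add 1
  have h2 := h1.rpow_const (p := -(1 / 2 : ℝ)) (Or.inl (by positivity))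
  have h3 : (1 + √(1 - y)) ^ (-(1 / 2 : ℝ) - 1) = w y / (1 + √(1 - y)) := by
    rw [Real.rpow_sub_one (by positivity)]; rfl
  refine HasDerivAt.congr_deriv (f := w) h2 ?_
  rw [h3]
  field_simp
  ring

theorem w_pos (y : ℝ) : 0 < w y := by
  unfold w
  positivity

theorem one_sub_yFun (x : ℝ) (hx : 0 < x) : 1 - yFun x = (1 / (4 * x + 1)) ^ 2 := by
  unfold yFun
  field_simp
  ring

theorem yFun_hasDeriv (x : ℝ) (hx : 0 < x) : HasDerivAt yFun (8 / (4 * x + 1) ^ 3) x := by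
  have hn : HasDerivAt (fun x : ℝ => 8 * x * (2 * x + 1)) (8 * (2 * x + 1) + 8 * x * 2) x := by
    have a : HasDerivAt (fun x : ℝ => 8 * x) 8 x := by
      simpa using (hasDerivAt_id x).const_mul (8 : ℝ)
    have b : HasDerivAt (fun x : ℝ => 2 * x + 1) 2 x := by
      simpa using ((hasDerivAt_id x).const_mul (2 : ℝ)).add_const 1
    exact a.mul b
  have hd : HasDerivAt (fun x : ℝ => (4 * x + 1) ^ 2) (2 * (4 * x + 1) * 4) x := by
    have b : HasDerivAt (fun x : ℝ => 4 * x + 1) 4 x := by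
      simpa using ((hasDerivAt_id x).const_mul (4 : ℝ)).add_const 1
    exact HasDerivAt.congr_deriv (b.fun_pow 2) (by norm_num)
  refine HasDerivAt.congr_deriv (f := yFun) (hn.div hd (by positivity)) ?_
  field_simp
  ring

theorem mgf_pde (x z : ℝ) (hx : 0 < x) (hz : yFun x * Real.exp z < 1) :
    DifferentiableAt ℝ (fun t => A t z) x ∧
    DifferentiableAt ℝ (fun t => A x t) z ∧
    v x * deriv (fun t => A t z) x - deriv (fun t => A x t) z + x * A x z = 0 ∧
    A x 0 = 1 := by
  have hs := one_sub_yFun x hx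
  have hy : yFun x < 1 := by
    have : 0 < (1 / (4 * x + 1)) ^ 2 := by positivity
    linarith
  have hsq : √(1 - yFun x) = 1 / (4 * x + 1) := by
    rw [hs]
    exact Real.sqrt_sq (by positivity)
  have hY := yFun_hasDeriv x hx
  have hW := w_hasDeriv _ hz
  have hW0 := w_hasDeriv _ hy
  rw [hsq] at hW0
  have hp := w_pos (yFun x)
  have e1 := HasDerivAt.comp (h₂ := w) x hW (hY.mul_const (Real.exp z))
  have e2 := HasDerivAt.comp (h₂ := w) x hW0 hY
  have d1' := e1.div e2 hp.ne'
  have d1 := HasDerivAt.congr_of_eventuallyEq (f₁ := fun t => A t z) d1'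
    (Filter.Eventually.of_forall fun _ => rfl)
  have e3 := HasDerivAt.comp (h₂ := w) z hW ((Real.hasDerivAt_exp z).const_mul (yFun x))
  have d2' := e3.div_const (w (yFun x))
  have d2 := HasDerivAt.congr_of_eventuallyEq (f₁ := fun t => A x t) d2'
    (Filter.Eventually.of_forall fun _ => rfl)
  refine ⟨d1.differentiableAt, d2.differentiableAt, ?_, ?_⟩
  · rw [d1.deriv, d2.deriv]
    simp only [A, v, Function.comp]
    generalize w (yFun x * Real.exp z) / (4 * √(1 - yFun x * Real.exp z) *
      (1 + √(1 - yFun x * Real.exp z))) = D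
    generalize w (yFun x * Real.exp z) = W
    generalize w (yFun x) = W0 at hp
    unfold yFun
    have : 4 * x + 1 + 1 ≠ 0 := by positivity
    field_simp
    ring
  · simp only [A, Real.exp_zero, mul_one]
    exact div_self hp.ne'
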